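/- arXiv:1802.05507 — 3 statements merged into one kernel-verified Lean document; each statement's English description precedes it below -/
import Mathlib

section
/- Let B ∈ M₄(ℝ) satisfy Bᵀ ηₗ B = ηₗ. Then for all V, V₀ ∈ ℝ⁴ one has A(B;V₀) · 𝔞(V) = 𝔞(BV + V₀). Hence the identification V ↦ [𝔞(V)] of Minkowski 4-space with the space Q_Σ of oriented spheres is equivariant with respect to the action of the Poincaré group on ℝ⁴ and of the Laguerre group on Q_Σ. -/
open Matrix

/-- The Lorentz scalar product on `ℝ⁴`: `(V,W) = −V⁰W⁰ + V¹W¹ + V²W² + V³W³`. -/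
def mprod (V W : Fin 4 → ℝ) : ℝ :=
  -(V 0 * W 0) + V 1 * W 1 + V 2 * W 2 + V 3 * W 3

/-- The Gram matrix `η` of the signature-(4,2) scalar product
`⟨𝔞,𝔟⟩ = −(𝔞⁰𝔟⁵ + 𝔞⁵𝔟⁰) − (𝔞¹𝔟⁴ + 𝔞⁴𝔟¹) + 𝔞²𝔟² + 𝔞³𝔟³` on `ℝ⁶`. -/
def etaM : Matrix (Fin 6) (Fin 6) ℝ :=
  !![0, 0, 0, 0, 0, -1;
     0, 0, 0, 0, -1, 0;
     0, 0, 1, 0, 0, 0;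
     0, 0, 0, 1, 0, 0;
     0, -1, 0, 0, 0, 0;
     -1, 0, 0, 0, 0, 0]

/-- The Gram matrix `ηₗ = diag(−1,1,1,1)` of the Lorentz product on `ℝ⁴`. -/
def etaL : Matrix (Fin 4) (Fin 4) ℝ :=
  !![-1, 0, 0, 0;
     0, 1, 0, 0;
     0, 0, 1, 0;
     0, 0, 0, 1]

/-- The matrix `K`. -/
noncomputable def Kmat : Matrix (Fin 4) (Fin 4) ℝ :=
  !![1 / Real.sqrt 2, 1 / Real.sqrt 2, 0, 0;
     0, 0, 1, 0;
     0, 0, 0, 1;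
     1 / Real.sqrt 2, -(1 / Real.sqrt 2), 0, 0]

/-- The matrix `K⁻¹`. -/
noncomputable def KmatInv : Matrix (Fin 4) (Fin 4) ℝ :=
  !![1 / Real.sqrt 2, 0, 0, 1 / Real.sqrt 2;
     1 / Real.sqrt 2, 0, 0, -(1 / Real.sqrt 2);
     0, 1, 0, 0;
     0, 0, 1, 0]

/-- The row vector `*Ṽ = (−Ṽ³, Ṽ¹, Ṽ², −Ṽ⁰)`, acting on `W` by
`*Ṽ(W) = −(Ṽ⁰W³ + Ṽ³W⁰) + Ṽ¹W¹ + Ṽ²W²`. -/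
def starV (Vt : Fin 4 → ℝ) : Fin 4 → ℝ := ![-(Vt 3), Vt 1, Vt 2, -(Vt 0)]

/-- The element `A(B;V) ∈ M₆(ℝ)` of the Laguerre group: the block matrix with block
rows `(1, 0, 0)`, `(Ṽ, B̃, 0)`, `((V,V)/2, *Ṽ·B̃, 1)`, where `Ṽ = KV`, `B̃ = KBK⁻¹`. -/
noncomputable def AofBV (B : Matrix (Fin 4) (Fin 4) ℝ) (V : Fin 4 → ℝ) :
    Matrix (Fin 6) (Fin 6) ℝ := fun i j =>
  let Vt : Fin 4 → ℝ := Kmat.mulVec V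
  let Bt : Matrix (Fin 4) (Fin 4) ℝ := Kmat * B * KmatInv
  if hi0 : i.val = 0 then (if j.val = 0 then 1 else 0)
  else if hi : i.val ≤ 4 then
    if hj0 : j.val = 0 then Vt ⟨i.val - 1, by omega⟩
    else if hj : j.val ≤ 4 then Bt ⟨i.val - 1, by omega⟩ ⟨j.val - 1, by omega⟩
    else 0
  else
    if hj0 : j.val = 0 then mprod V V / 2
    else if hj : j.val ≤ 4 then Matrix.vecMul (starV Vt) Bt ⟨j.val - 1, by omega⟩
    else 1

/-- The basis vector `ε₅` of `ℝ⁶`. -/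
def eps5 : Fin 6 → ℝ := ![0, 0, 0, 0, 0, 1]

/-- `𝔞(V) = (1, Ṽ⁰, Ṽ¹, Ṽ², Ṽ³, (V,V)/2)` where `Ṽ = KV`. -/
noncomputable def aVec (V : Fin 4 → ℝ) : Fin 6 → ℝ :=
  ![1, Kmat.mulVec V 0, Kmat.mulVec V 1, Kmat.mulVec V 2, Kmat.mulVec V 3,
    mprod V V / 2]

/-!
The first five coordinates of `A(B;V₀) · 𝔞(V)` and `𝔞(BV + V₀)` agree for every matrix `B`, because
`B̃ (KV) = K(BV)`. Since `*(KV₀)(KW) = (V₀, W)`, the last coordinate of `A(B;V₀) · 𝔞(V)` is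
`(V₀,V₀)/2 + (V₀,BV) + (V,V)/2`, whereas polarization gives
`(V₀,V₀)/2 + (V₀,BV) + (BV,BV)/2` for `𝔞(BV + V₀)`. The difference
`((V,V) − (BV,BV))/2` vanishes when `B` preserves the Lorentz product.
-/

section ConsSnoc

variable {R : Type*} {n : ℕ}

/-- The vector `(a, W, c)` with first entry `a`, last entry `c` and the vector `W` in between. It
matches the block decomposition `1 + n + 1` of the rows of `AofBV` and of `aVec`, for `n = 4`. -/
def consSnoc (a : R) (W : Fin n → R) (c : R) : Fin (n + 2) → R :=
  vecCons a (Fin.snoc W c)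

theorem consSnoc_zero (a : R) (W : Fin n → R) (c : R) : consSnoc a W c 0 = a :=
  rfl

theorem consSnoc_succ_castSucc (a : R) (W : Fin n → R) (c : R) (i : Fin n) :
    consSnoc a W c i.castSucc.succ = W i := by
  simp only [consSnoc, cons_val_succ, Fin.snoc_castSucc]

theorem consSnoc_last (a : R) (W : Fin n → R) (c : R) :
    consSnoc a W c (Fin.last n).succ = c := by
  simp only [consSnoc, cons_val_succ, Fin.snoc_last]

theorem eq_consSnoc_iff {v : Fin (n + 2) → R} {a : R} {W : Fin n → R} {c : R} :
    v = consSnoc a W c ↔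
      v 0 = a ∧ (∀ i : Fin n, v i.castSucc.succ = W i) ∧ v (Fin.last n).succ = c := by
  rw [funext_iff, Fin.forall_fin_succ, Fin.forall_fin_succ']
  simp only [consSnoc_zero, consSnoc_succ_castSucc, consSnoc_last]

theorem consSnoc_dotProduct_consSnoc [NonUnitalNonAssocSemiring R] (a a' : R)
    (W W' : Fin n → R) (c c' : R) :
    consSnoc a W c ⬝ᵥ consSnoc a' W' c' = a * a' + W ⬝ᵥ W' + c * c' := by
  simp only [dotProduct, Fin.sum_univ_succ (n := n + 1), Fin.sum_univ_castSucc, consSnoc_zero,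
    consSnoc_succ_castSucc, consSnoc_last, add_assoc]

end ConsSnoc

section LorentzProduct

variable (V W : Fin 4 → ℝ)

theorem mprod_eq_dotProduct : mprod V W = V ⬝ᵥ etaL *ᵥ W := by
  simp [mprod, etaL, dotProduct, mulVec, Fin.sum_univ_four]

theorem mprod_mulVec_mulVec {B : Matrix (Fin 4) (Fin 4) ℝ} (hB : Bᵀ * etaL * B = etaL) :
    mprod (B *ᵥ V) (B *ᵥ W) = mprod V W := by
  rw [mprod_eq_dotProduct, mprod_eq_dotProduct, ← vecMul_transpose, ← dotProduct_mulVec,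
    mulVec_mulVec, mulVec_mulVec, hB]

theorem mprod_add_self : mprod (V + W) (V + W) = mprod V V + 2 * mprod V W + mprod W W := by
  simp only [mprod, Pi.add_apply]
  ring

end LorentzProduct

section NullCoordinates

theorem Kmat_mulVec (V : Fin 4 → ℝ) :
    Kmat *ᵥ V = ![(√2)⁻¹ * (V 0 + V 1), V 2, V 3, (√2)⁻¹ * (V 0 - V 1)] := by
  ext i
  fin_cases i <;> simp [Kmat, mulVec, dotProduct, Fin.sum_univ_four, mul_add, sub_eq_add_neg]

theorem KmatInv_mulVec (W : Fin 4 → ℝ) :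
    KmatInv *ᵥ W = ![(√2)⁻¹ * (W 0 + W 3), (√2)⁻¹ * (W 0 - W 3), W 1, W 2] := by
  ext i
  fin_cases i <;> simp [KmatInv, mulVec, dotProduct, Fin.sum_univ_four, mul_add, sub_eq_add_neg]

theorem KmatInv_mulVec_Kmat_mulVec (V : Fin 4 → ℝ) : KmatInv *ᵥ Kmat *ᵥ V = V := by
  have h : (√2)⁻¹ * (√2)⁻¹ = (2⁻¹ : ℝ) := TsirelsonInequality.sqrt_two_inv_mul_self
  rw [KmatInv_mulVec, Kmat_mulVec]
  ext i
  fin_cases i <;> simp only [Fin.reduceFinMk, cons_val]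
  · linear_combination 2 * V 0 * h
  · linear_combination 2 * V 1 * h

theorem Kmat_conj_mulVec_Kmat_mulVec (B : Matrix (Fin 4) (Fin 4) ℝ) (V : Fin 4 → ℝ) :
    (Kmat * B * KmatInv) *ᵥ Kmat *ᵥ V = Kmat *ᵥ B *ᵥ V := by
  rw [← mulVec_mulVec, KmatInv_mulVec_Kmat_mulVec, mulVec_mulVec]

theorem starV_dotProduct (V W : Fin 4 → ℝ) :
    starV V ⬝ᵥ W = -(V 0 * W 3 + V 3 * W 0) + V 1 * W 1 + V 2 * W 2 := by
  simp only [starV, dotProduct, Fin.sum_univ_four, cons_val]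
  ring

theorem starV_Kmat_mulVec_dotProduct_Kmat_mulVec (V W : Fin 4 → ℝ) :
    starV (Kmat *ᵥ V) ⬝ᵥ Kmat *ᵥ W = mprod V W := by
  have h : (√2)⁻¹ * (√2)⁻¹ = (2⁻¹ : ℝ) := TsirelsonInequality.sqrt_two_inv_mul_self
  simp only [starV_dotProduct, Kmat_mulVec, mprod, cons_val]
  linear_combination (-2 * V 0 * W 0 + 2 * V 1 * W 1) * h

end NullCoordinates

theorem aVec_add_smul_eps5 (V : Fin 4 → ℝ) (t : ℝ) :
    aVec V + t • eps5 = consSnoc 1 (Kmat *ᵥ V) (mprod V V / 2 + t) := by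
  refine eq_consSnoc_iff.2 ⟨?_, fun i => ?_, ?_⟩
  · simp [aVec, eps5]
  · fin_cases i <;> simp [aVec, eps5]
  · simp [aVec, eps5]

theorem aVec_eq_consSnoc (V : Fin 4 → ℝ) :
    aVec V = consSnoc 1 (Kmat *ᵥ V) (mprod V V / 2) := by
  simpa only [zero_smul, add_zero] using aVec_add_smul_eps5 V 0

section AofBV

variable (B : Matrix (Fin 4) (Fin 4) ℝ) (V₀ : Fin 4 → ℝ)

theorem AofBV_row_zero : AofBV B V₀ 0 = consSnoc 1 0 0 :=
  eq_consSnoc_iff.2 ⟨rfl, fun _ => rfl, rfl⟩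

theorem AofBV_row_succ_castSucc (i : Fin 4) :
    AofBV B V₀ i.castSucc.succ =
      consSnoc ((Kmat *ᵥ V₀) i) ((Kmat * B * KmatInv) i) 0 := by
  refine eq_consSnoc_iff.2 ⟨?_, fun j => ?_, ?_⟩
  · fin_cases i <;> rfl
  · fin_cases i <;> fin_cases j <;> rfl
  · fin_cases i <;> rfl

theorem AofBV_row_last :
    AofBV B V₀ (Fin.last 4).succ =
      consSnoc (mprod V₀ V₀ / 2) (starV (Kmat *ᵥ V₀) ᵥ* (Kmat * B * KmatInv)) 1 := by
  refine eq_consSnoc_iff.2 ⟨rfl, fun j => ?_, rfl⟩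
  fin_cases j <;> rfl

theorem AofBV_mulVec_consSnoc (a : ℝ) (W : Fin 4 → ℝ) (c : ℝ) :
    AofBV B V₀ *ᵥ consSnoc a W c =
      consSnoc a (a • Kmat *ᵥ V₀ + (Kmat * B * KmatInv) *ᵥ W)
        (a * (mprod V₀ V₀ / 2) + starV (Kmat *ᵥ V₀) ⬝ᵥ (Kmat * B * KmatInv) *ᵥ W + c) := by
  refine eq_consSnoc_iff.2 ⟨?_, fun i => ?_, ?_⟩
  · rw [mulVec, AofBV_row_zero, consSnoc_dotProduct_consSnoc, zero_dotProduct]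
    ring
  · rw [mulVec, AofBV_row_succ_castSucc, consSnoc_dotProduct_consSnoc, zero_mul, add_zero,
      mul_comm _ a]
    rfl
  · rw [mulVec, AofBV_row_last, consSnoc_dotProduct_consSnoc, ← dotProduct_mulVec]
    ring

end AofBV

theorem stmt11_general (B : Matrix (Fin 4) (Fin 4) ℝ) (V V₀ : Fin 4 → ℝ) :
    AofBV B V₀ *ᵥ aVec V =
      aVec (B *ᵥ V + V₀) + ((mprod V V - mprod (B *ᵥ V) (B *ᵥ V)) / 2) • eps5 := by
  rw [add_comm (B *ᵥ V), aVec_eq_consSnoc, AofBV_mulVec_consSnoc, aVec_add_smul_eps5,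
    Kmat_conj_mulVec_Kmat_mulVec, starV_Kmat_mulVec_dotProduct_Kmat_mulVec, one_smul, mulVec_add,
    mprod_add_self]
  congr 1
  ring

/-- If `Bᵀ ηₗ B = ηₗ`, then `A(B;V₀) · 𝔞(V) = 𝔞(BV + V₀)` for all `V, V₀ ∈ ℝ⁴`:
the identification `V ↦ [𝔞(V)]` of Minkowski 4-space with the space `Q_Σ` of
oriented spheres is equivariant for the Poincaré group action on `ℝ⁴` and the
Laguerre group action on `Q_Σ`. -/
theorem stmt11 (B : Matrix (Fin 4) (Fin 4) ℝ) (hB : Bᵀ * etaL * B = etaL)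
    (V V₀ : Fin 4 → ℝ) :
    (AofBV B V₀).mulVec (aVec V) = aVec (B.mulVec V + V₀) := by
  rw [stmt11_general, mprod_mulVec_mulVec V V hB, sub_self, zero_div, zero_smul, add_zero]
end

section
/- Let A ∈ M₆(ℝ) satisfy Aᵀ η A = η and A ε₅ = ε₅. Then there exist a unique B ∈ M₄(ℝ) with Bᵀ ηₗ B = ηₗ and a unique V ∈ ℝ⁴ such that A = A(B;V). Moreover det A = det B and −⟨A(ε₁+ε₄), ε₁+ε₄⟩ = 2 B⁰⁰. Consequently (B;V) ↦ A(B;V) is a bijection from the restricted Poincaré group {(B;V) : Bᵀηₗ B = ηₗ, det B = 1, B⁰⁰ ≥ 1, V ∈ ℝ⁴} onto the Laguerre group L = {A : AᵀηA = η, det A = 1, −⟨A(ε₁+ε₄), ε₁+ε₄⟩ ≥ 2, Aε₅ = ε₅}. -/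
open Matrix

/-- The scalar product of signature (4,2) on `ℝ⁶`. -/
def lprod (a b : Fin 6 → ℝ) : ℝ :=
  -(a 0 * b 5 + a 5 * b 0) - (a 1 * b 4 + a 4 * b 1) + a 2 * b 2 + a 3 * b 3

/-- The vector `ε₁ + ε₄` of `ℝ⁶`. -/
def eps14 : Fin 6 → ℝ := ![0, 1, 0, 0, 1, 0]

/-!
In the null coordinates `Ṽ = KV`, `η` is the orthogonal sum of the Lorentz form and a hyperbolic
plane spanned by `ε₀` and `ε₅`. If an isometry `A` fixes `ε₅`, then pairing with `ε₅` shows that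
its first row is `(1, 0, 0)`, so `A` is block lower triangular. For a block lower triangular matrix
the isometry equations say exactly that the middle block is a Lorentz transformation and that the
last row is the one prescribed in `A(B;V)`.
-/

theorem submatrix_equiv_inj {m n R : Type*} (e : m ≃ n) {A B : Matrix n n R} :
    A.submatrix e e = B.submatrix e e ↔ A = B :=
  ⟨fun h => by simpa using congrArg (fun C => C.submatrix e.symm e.symm) h, fun h => h ▸ rfl⟩

section PreservesGram

variable {m n R : Type*} [Fintype m] [Fintype n] [CommRing R]

/-- `A` is an isometry of the bilinear form with Gram matrix `J`. -/
def PreservesGram (J A : Matrix n n R) : Prop :=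
  Aᵀ * J * A = J

theorem preservesGram_iff_col {J A : Matrix n n R} :
    PreservesGram J A ↔ ∀ i j, A.col i ⬝ᵥ J *ᵥ A.col j = J i j := by
  rw [PreservesGram, ← Matrix.ext_iff]
  exact forall₂_congr fun i j => by rw [mul_mul_apply]; rfl

theorem preservesGram_submatrix_equiv_iff (e : m ≃ n) {J A : Matrix n n R} :
    PreservesGram (J.submatrix e e) (A.submatrix e e) ↔ PreservesGram J A := by
  simp only [PreservesGram, transpose_submatrix, submatrix_mul_equiv]
  exact submatrix_equiv_inj e

theorem preservesGram_conj_iff [DecidableEq n] {P Q J B : Matrix n n R} (hPQ : P * Q = 1) :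
    PreservesGram J (P * B * Q) ↔ PreservesGram (Pᵀ * J * P) B := by
  have hQ : IsUnit Q := IsUnit.of_mul_eq_one_right P hPQ
  have hQT : IsUnit Qᵀ := (isUnit_transpose Q).mpr hQ
  have hJ : J = Qᵀ * (Pᵀ * J * P) * Q := by
    calc J = (P * Q)ᵀ * J * (P * Q) := by simp [hPQ]
      _ = Qᵀ * (Pᵀ * J * P) * Q := by simp only [transpose_mul, Matrix.mul_assoc]
  have hB : (P * B * Q)ᵀ * J * (P * B * Q) = Qᵀ * (Bᵀ * (Pᵀ * J * P) * B) * Q := by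
    simp only [transpose_mul, Matrix.mul_assoc]
  calc (P * B * Q)ᵀ * J * (P * B * Q) = J
      ↔ Qᵀ * (Bᵀ * (Pᵀ * J * P) * B) * Q = Qᵀ * (Pᵀ * J * P) * Q := by rw [hB, ← hJ]
    _ ↔ Bᵀ * (Pᵀ * J * P) * B = Pᵀ * J * P := by rw [hQ.mul_left_inj, hQT.mul_right_inj]

theorem mulVec_dotProduct_mulVec_mulVec (P : Matrix m n R) (J : Matrix m m R) (x y : n → R) :
    (P *ᵥ x) ⬝ᵥ J *ᵥ (P *ᵥ y) = x ⬝ᵥ (Pᵀ * J * P) *ᵥ y := by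
  rw [← vecMul_transpose, ← dotProduct_mulVec, mulVec_mulVec, mulVec_mulVec, Matrix.mul_assoc]

theorem dotProduct_mulVec_comm_of_isSymm {G : Matrix n n R} (hG : G.IsSymm) (x y : n → R) :
    x ⬝ᵥ G *ᵥ y = y ⬝ᵥ G *ᵥ x := by
  rw [dotProduct_mulVec, dotProduct_comm, ← mulVec_transpose, hG.eq]

end PreservesGram

section HyperbolicExtension

variable {n R : Type*} [CommRing R]

/-- The Gram matrix of the orthogonal sum of the form with Gram matrix `G` and a hyperbolic plane,
whose null basis vectors `e₋` and `e₊`, with `⟨e₋, e₊⟩ = -1`, are placed before and after the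
basis indexed by `n`. -/
def hyperbolicExtension (G : Matrix n n R) : Matrix (Fin 1 ⊕ n ⊕ Fin 1) (Fin 1 ⊕ n ⊕ Fin 1) R :=
  fromBlocks 0 (fromCols 0 !![-1]) (fromRows 0 !![-1]) (fromBlocks G 0 0 0)

/-- The matrix with block rows `(1, 0, 0)`, `(w, M, 0)`, `(c, r, 1)`: the shape of the isometries
of a hyperbolic extension which fix `e₊`. -/
def lowerBordered (M : Matrix n n R) (w r : n → R) (c : R) :
    Matrix (Fin 1 ⊕ n ⊕ Fin 1) (Fin 1 ⊕ n ⊕ Fin 1) R :=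
  fromBlocks 1 0 (fromRows (replicateCol (Fin 1) w) !![c])
    (fromBlocks M 0 (replicateRow (Fin 1) r) 1)

theorem lowerBordered_inj {M M' : Matrix n n R} {w w' r r' : n → R} {c c' : R} :
    lowerBordered M w r c = lowerBordered M' w' r' c' ↔ M = M' ∧ w = w' ∧ r = r' ∧ c = c' := by
  simp only [lowerBordered, fromBlocks_inj, fromRows_inj.eq_iff, replicateCol_inj,
    EmbeddingLike.apply_eq_iff_eq, vecCons_inj, and_true, replicateRow_inj, true_and]
  tauto

variable [Fintype n]

theorem hyperbolicExtension_mulVec (G : Matrix n n R) (y : Fin 1 ⊕ n ⊕ Fin 1 → R) :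
    hyperbolicExtension G *ᵥ y =
      Sum.elim (fun _ => -y (.inr (.inr 0)))
        (Sum.elim (G *ᵥ fun i => y (.inr (.inl i))) fun _ => -y (.inl 0)) := by
  ext (i | i | i) <;> simp [hyperbolicExtension, mulVec, dotProduct]

theorem dotProduct_hyperbolicExtension_mulVec (G : Matrix n n R) (x y : Fin 1 ⊕ n ⊕ Fin 1 → R) :
    x ⬝ᵥ hyperbolicExtension G *ᵥ y =
      -(x (.inl 0) * y (.inr (.inr 0)) + x (.inr (.inr 0)) * y (.inl 0)) +
        (fun i => x (.inr (.inl i))) ⬝ᵥ G *ᵥ fun i => y (.inr (.inl i)) := by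
  simp only [hyperbolicExtension_mulVec, dotProduct, Fintype.sum_sum_type, Fintype.sum_unique,
    Fin.default_eq_zero, Sum.elim_inl, Sum.elim_inr]
  ring

theorem lowerBordered_mulVec_sumElim_dotProduct (G M : Matrix n n R) (w r x y : n → R) (c : R) :
    (lowerBordered M w r c *ᵥ Sum.elim 0 (Sum.elim x 0)) ⬝ᵥ
        hyperbolicExtension G *ᵥ Sum.elim 0 (Sum.elim y 0) =
      (M *ᵥ x) ⬝ᵥ G *ᵥ y := by
  simp [dotProduct_hyperbolicExtension_mulVec, lowerBordered, fromBlocks_mulVec]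

theorem preservesGram_lowerBordered_iff {G : Matrix n n R} (hG : G.IsSymm) {M : Matrix n n R}
    {w r : n → R} {c : R} :
    PreservesGram (hyperbolicExtension G) (lowerBordered M w r c) ↔
      PreservesGram G M ∧ r = w ᵥ* G ᵥ* M ∧ 2 * c = w ⬝ᵥ G *ᵥ w := by
  have hcols : PreservesGram (hyperbolicExtension G) (lowerBordered M w r c) ↔
      (-c + -c + w ⬝ᵥ G *ᵥ w = 0 ∧ ∀ j, -r j + w ⬝ᵥ G *ᵥ M.col j = 0) ∧
        ∀ i, -r i + M.col i ⬝ᵥ G *ᵥ w = 0 ∧ ∀ j, M.col i ⬝ᵥ G *ᵥ M.col j = G i j := by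
    have hzero (u : n → R) : u ⬝ᵥ (G *ᵥ fun _ => 0) = 0 := by
      change u ⬝ᵥ G *ᵥ 0 = 0
      rw [mulVec_zero, dotProduct_zero]
    have hcol (j : n) : M.col j = fun i => M i j := rfl
    simp only [preservesGram_iff_col, dotProduct_hyperbolicExtension_mulVec, Sum.forall,
      Fin.forall_fin_one]
    simp [lowerBordered, hyperbolicExtension, hzero, hcol]
  have hr (j : n) : (w ᵥ* G ᵥ* M) j = w ⬝ᵥ G *ᵥ M.col j := by
    rw [dotProduct_mulVec]; rfl
  rw [hcols, preservesGram_iff_col, funext_iff]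
  constructor
  · rintro ⟨⟨hww, hwM⟩, hM⟩
    exact ⟨fun i => (hM i).2, fun j => (neg_add_eq_zero.mp (hwM j)).trans (hr j).symm,
      by linear_combination -hww⟩
  · rintro ⟨hM, hwM, hww⟩
    have hwM' (j : n) : -r j + w ⬝ᵥ G *ᵥ M.col j = 0 := by rw [hwM, hr, neg_add_cancel]
    refine ⟨⟨by linear_combination -hww, hwM'⟩, fun i => ⟨?_, hM i⟩⟩
    rw [dotProduct_mulVec_comm_of_isSymm hG, hwM']

variable [DecidableEq n]

theorem det_lowerBordered (M : Matrix n n R) (w r : n → R) (c : R) :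
    (lowerBordered M w r c).det = M.det := by
  simp [lowerBordered, det_fromBlocks_zero₁₂]

theorem lowerBordered_mulVec_single_last (M : Matrix n n R) (w r : n → R) (c : R) :
    lowerBordered M w r c *ᵥ Pi.single (.inr (.inr 0)) 1 = Pi.single (.inr (.inr 0)) 1 := by
  rw [mulVec_single_one]
  ext (i | i | i) <;> simp [lowerBordered, Fin.eq_zero]

theorem exists_eq_lowerBordered {G : Matrix n n R}
    {A : Matrix (Fin 1 ⊕ n ⊕ Fin 1) (Fin 1 ⊕ n ⊕ Fin 1) R}
    (hA : PreservesGram (hyperbolicExtension G) A)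
    (hfix : A *ᵥ Pi.single (.inr (.inr 0)) 1 = Pi.single (.inr (.inr 0)) 1) :
    ∃ M w r c, A = lowerBordered M w r c := by
  rw [mulVec_single_one] at hfix
  have hcol (i) : A i (.inr (.inr 0)) = Pi.single (M := fun _ => R) (.inr (.inr 0)) 1 i :=
    congrFun hfix i
  have hrow (j) : A (.inl 0) j = Pi.single (M := fun _ => R) (.inl 0) 1 j := by
    have h := preservesGram_iff_col.mp hA j (.inr (.inr 0))
    rw [hfix, dotProduct_hyperbolicExtension_mulVec] at h
    rcases j with j | j | j <;>
      simpa [hyperbolicExtension, mulVec, dotProduct, Fin.eq_zero] using h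
  refine ⟨of fun i j => A (.inr (.inl i)) (.inr (.inl j)), fun i => A (.inr (.inl i)) (.inl 0),
    fun j => A (.inr (.inr 0)) (.inr (.inl j)), A (.inr (.inr 0)) (.inl 0), ?_⟩
  ext (i | i | i) (j | j | j) <;> simp [lowerBordered, hrow, hcol, Fin.eq_zero]

end HyperbolicExtension

section NullCoordinates

/-- The Gram matrix of the Lorentz product in the null coordinates `Ṽ = KV`. -/
def etaNull : Matrix (Fin 4) (Fin 4) ℝ :=
  !![0, 0, 0, -1;
     0, 1, 0, 0;
     0, 0, 1, 0;
     -1, 0, 0, 0]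

theorem isSymm_etaNull : etaNull.IsSymm := by
  ext i j
  fin_cases i <;> fin_cases j <;> rfl

theorem dotProduct_etaNull_mulVec (u v : Fin 4 → ℝ) :
    u ⬝ᵥ etaNull *ᵥ v = -(u 0 * v 3 + u 3 * v 0) + u 1 * v 1 + u 2 * v 2 := by
  simp only [etaNull, dotProduct, mulVec, of_apply, cons_val', cons_val_fin_one, Fin.sum_univ_four,
    cons_val_zero, cons_val_one, cons_val, zero_mul, add_zero, neg_mul, one_mul, zero_add, mul_neg]
  ring

theorem mprod_mulVec_single_zero (B : Matrix (Fin 4) (Fin 4) ℝ) (t : ℝ) :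
    mprod (B *ᵥ Pi.single 0 t) (Pi.single 0 t) = -(t * t * B 0 0) := by
  simp only [mprod, mulVec_single, Pi.smul_apply, col_apply, MulOpposite.smul_eq_mul_unop,
    MulOpposite.unop_op, Pi.single_eq_same, ne_eq, one_ne_zero, not_false_eq_true,
    Pi.single_eq_of_ne, mul_zero, add_zero, Fin.reduceEq]
  ring

theorem Kmat_mul_KmatInv : Kmat * KmatInv = 1 := by
  ext i j
  fin_cases i <;> fin_cases j <;>
    simp [Kmat, KmatInv, mul_apply, Fin.sum_univ_four, ← mul_inv] <;> norm_num

theorem KmatInv_mul_Kmat : KmatInv * Kmat = 1 :=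
  mul_eq_one_comm.mp Kmat_mul_KmatInv

theorem Kmat_transpose_mul_etaNull_mul_Kmat : Kmatᵀ * etaNull * Kmat = etaL := by
  ext i j
  fin_cases i <;> fin_cases j <;>
    simp [Kmat, etaNull, etaL, mul_apply, Fin.sum_univ_four, ← mul_inv] <;> norm_num

theorem Kmat_mulVec_dotProduct_etaNull (V W : Fin 4 → ℝ) :
    (Kmat *ᵥ V) ⬝ᵥ etaNull *ᵥ (Kmat *ᵥ W) = mprod V W := by
  rw [mulVec_dotProduct_mulVec_mulVec, Kmat_transpose_mul_etaNull_mul_Kmat]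
  simp [etaL, mprod, dotProduct, mulVec, Fin.sum_univ_four]

theorem starV_eq_vecMul_etaNull (u : Fin 4 → ℝ) : starV u = u ᵥ* etaNull := by
  ext j
  fin_cases j <;> simp [starV, etaNull, vecMul, dotProduct, Fin.sum_univ_four]

end NullCoordinates

section Laguerre

/-- The splitting of the indices `0, …, 5` into the blocks `{0}`, `{1, 2, 3, 4}`, `{5}`. -/
def blockEquiv : Fin 1 ⊕ Fin 4 ⊕ Fin 1 ≃ Fin 6 :=
  ((Equiv.refl (Fin 1)).sumCongr finSumFinEquiv).trans finSumFinEquiv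

theorem etaM_submatrix_blockEquiv :
    etaM.submatrix blockEquiv blockEquiv = hyperbolicExtension etaNull := by
  ext (i | i | i) (j | j | j) <;> fin_cases i <;> fin_cases j <;> rfl

theorem AofBV_submatrix_blockEquiv (B : Matrix (Fin 4) (Fin 4) ℝ) (V : Fin 4 → ℝ) :
    (AofBV B V).submatrix blockEquiv blockEquiv =
      lowerBordered (Kmat * B * KmatInv) (Kmat *ᵥ V)
        ((Kmat *ᵥ V) ᵥ* etaNull ᵥ* (Kmat * B * KmatInv)) (mprod V V / 2) := by
  rw [← starV_eq_vecMul_etaNull]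
  ext (i | i | i) (j | j | j) <;> fin_cases i <;> fin_cases j <;> rfl

theorem comp_blockEquiv (v : Fin 6 → ℝ) :
    v ∘ blockEquiv =
      Sum.elim (fun _ => v 0) (Sum.elim ![v 1, v 2, v 3, v 4] fun _ => v 5) := by
  ext (i | i | i) <;> fin_cases i <;> rfl

theorem lprod_eq_dotProduct (a b : Fin 6 → ℝ) :
    lprod a b = (a ∘ blockEquiv) ⬝ᵥ hyperbolicExtension etaNull *ᵥ (b ∘ blockEquiv) := by
  rw [dotProduct_hyperbolicExtension_mulVec, comp_blockEquiv, comp_blockEquiv]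
  simp only [Sum.elim_inl, Sum.elim_inr, dotProduct_etaNull_mulVec, cons_val, lprod]
  ring

theorem mulVec_comp_blockEquiv (A : Matrix (Fin 6) (Fin 6) ℝ) (v : Fin 6 → ℝ) :
    (A *ᵥ v) ∘ blockEquiv = A.submatrix blockEquiv blockEquiv *ᵥ (v ∘ blockEquiv) := by
  simp [submatrix_mulVec_equiv, Function.comp_assoc]

theorem mulVec_eps5_eq_iff {A : Matrix (Fin 6) (Fin 6) ℝ} :
    A *ᵥ eps5 = eps5 ↔
      A.submatrix blockEquiv blockEquiv *ᵥ Pi.single (.inr (.inr 0)) 1 =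
        Pi.single (.inr (.inr 0)) 1 := by
  have heps : eps5 ∘ blockEquiv = Pi.single (.inr (.inr 0)) 1 := by
    ext (i | i | i) <;> fin_cases i <;> rfl
  rw [← heps, ← mulVec_comp_blockEquiv, blockEquiv.surjective.injective_comp_right.eq_iff]

theorem AofBV_mulVec_eps5 (B : Matrix (Fin 4) (Fin 4) ℝ) (V : Fin 4 → ℝ) :
    AofBV B V *ᵥ eps5 = eps5 := by
  rw [mulVec_eps5_eq_iff, AofBV_submatrix_blockEquiv, lowerBordered_mulVec_single_last]

theorem det_AofBV (B : Matrix (Fin 4) (Fin 4) ℝ) (V : Fin 4 → ℝ) : (AofBV B V).det = B.det := by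
  rw [← det_submatrix_equiv_self blockEquiv, AofBV_submatrix_blockEquiv, det_lowerBordered,
    det_mul_comm, ← Matrix.mul_assoc, KmatInv_mul_Kmat, Matrix.one_mul]

-- `ε₁ + ε₄` is `√2` times the time axis of Minkowski space in null coordinates.
theorem eps14_comp_blockEquiv :
    eps14 ∘ blockEquiv =
      Sum.elim (0 : Fin 1 → ℝ) (Sum.elim (Kmat *ᵥ Pi.single 0 √2) (0 : Fin 1 → ℝ)) := by
  rw [comp_blockEquiv]
  ext (i | i | i) <;> fin_cases i <;> simp [eps14, Kmat]

theorem neg_lprod_AofBV_mulVec_eps14 (B : Matrix (Fin 4) (Fin 4) ℝ) (V : Fin 4 → ℝ) :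
    -lprod (AofBV B V *ᵥ eps14) eps14 = 2 * B 0 0 := by
  have hconj (x : Fin 4 → ℝ) : (Kmat * B * KmatInv) *ᵥ (Kmat *ᵥ x) = Kmat *ᵥ (B *ᵥ x) := by
    simp [mulVec_mulVec, Matrix.mul_assoc, KmatInv_mul_Kmat]
  rw [lprod_eq_dotProduct, mulVec_comp_blockEquiv, AofBV_submatrix_blockEquiv,
    eps14_comp_blockEquiv, lowerBordered_mulVec_sumElim_dotProduct, hconj,
    Kmat_mulVec_dotProduct_etaNull, mprod_mulVec_single_zero, Real.mul_self_sqrt zero_le_two,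
    neg_neg]

theorem preservesGram_AofBV_iff {B : Matrix (Fin 4) (Fin 4) ℝ} {V : Fin 4 → ℝ} :
    PreservesGram etaM (AofBV B V) ↔ PreservesGram etaL B := by
  rw [← preservesGram_submatrix_equiv_iff blockEquiv, etaM_submatrix_blockEquiv,
    AofBV_submatrix_blockEquiv, preservesGram_lowerBordered_iff isSymm_etaNull,
    preservesGram_conj_iff Kmat_mul_KmatInv, Kmat_transpose_mul_etaNull_mul_Kmat,
    Kmat_mulVec_dotProduct_etaNull]
  exact and_iff_left ⟨rfl, by ring⟩

theorem AofBV_injective :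
    Function.Injective fun BV : Matrix (Fin 4) (Fin 4) ℝ × (Fin 4 → ℝ) => AofBV BV.1 BV.2 := by
  have hK : IsUnit Kmat := IsUnit.of_mul_eq_one KmatInv Kmat_mul_KmatInv
  have hKInv : IsUnit KmatInv := IsUnit.of_mul_eq_one Kmat KmatInv_mul_Kmat
  rintro ⟨B, V⟩ ⟨B', V'⟩ h
  simp only [← submatrix_equiv_inj blockEquiv, AofBV_submatrix_blockEquiv, lowerBordered_inj,
    hKInv.mul_left_inj, hK.mul_right_inj, (mulVec_injective_of_isUnit hK).eq_iff] at h
  exact Prod.ext h.1 h.2.1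

theorem exists_eq_AofBV {A : Matrix (Fin 6) (Fin 6) ℝ} (hA : PreservesGram etaM A)
    (hfix : A *ᵥ eps5 = eps5) : ∃ B V, A = AofBV B V := by
  rw [← preservesGram_submatrix_equiv_iff blockEquiv, etaM_submatrix_blockEquiv] at hA
  obtain ⟨M, w, r, c, hAM⟩ := exists_eq_lowerBordered hA (mulVec_eps5_eq_iff.mp hfix)
  rw [hAM, preservesGram_lowerBordered_iff isSymm_etaNull] at hA
  obtain ⟨-, hr, hc⟩ := hA
  have hM : Kmat * (KmatInv * M * Kmat) * KmatInv = M := by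
    calc Kmat * (KmatInv * M * Kmat) * KmatInv = Kmat * KmatInv * M * (Kmat * KmatInv) := by
          simp only [Matrix.mul_assoc]
      _ = M := by simp [Kmat_mul_KmatInv]
  have hw : Kmat *ᵥ (KmatInv *ᵥ w) = w := by
    rw [mulVec_mulVec, Kmat_mul_KmatInv, one_mulVec]
  refine ⟨KmatInv * M * Kmat, KmatInv *ᵥ w, (submatrix_equiv_inj blockEquiv).mp ?_⟩
  rw [hAM, AofBV_submatrix_blockEquiv, hM, ← Kmat_mulVec_dotProduct_etaNull, hw,
    lowerBordered_inj]
  exact ⟨rfl, rfl, hr, by linarith⟩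

end Laguerre

/-- Every `A ∈ M₆(ℝ)` with `Aᵀ η A = η` and `A ε₅ = ε₅` is of the form `A(B;V)` for
a unique Lorentz transformation `B` and a unique `V ∈ ℝ⁴`; moreover
`det A(B;V) = det B` and `−⟨A(B;V)(ε₁+ε₄), ε₁+ε₄⟩ = 2 B⁰⁰`. Consequently
`(B;V) ↦ A(B;V)` is a bijection from the restricted Poincaré group onto the
Laguerre group `L`. -/
theorem stmt14 :
    (∀ A : Matrix (Fin 6) (Fin 6) ℝ, Aᵀ * etaM * A = etaM → A.mulVec eps5 = eps5 →
      ∃! BV : Matrix (Fin 4) (Fin 4) ℝ × (Fin 4 → ℝ),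
        BV.1ᵀ * etaL * BV.1 = etaL ∧ A = AofBV BV.1 BV.2) ∧
    (∀ (B : Matrix (Fin 4) (Fin 4) ℝ) (V : Fin 4 → ℝ), Bᵀ * etaL * B = etaL →
      (AofBV B V).det = B.det ∧
      -(lprod ((AofBV B V).mulVec eps14) eps14) = 2 * B 0 0) ∧
    Set.BijOn (fun BV : Matrix (Fin 4) (Fin 4) ℝ × (Fin 4 → ℝ) => AofBV BV.1 BV.2)
      {BV | BV.1ᵀ * etaL * BV.1 = etaL ∧ BV.1.det = 1 ∧ 1 ≤ BV.1 0 0}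
      {A | Aᵀ * etaM * A = etaM ∧ A.det = 1 ∧
        2 ≤ -(lprod (A.mulVec eps14) eps14) ∧ A.mulVec eps5 = eps5} := by
  have hex (A : Matrix (Fin 6) (Fin 6) ℝ) (hA : Aᵀ * etaM * A = etaM)
      (hfix : A *ᵥ eps5 = eps5) : ∃ B V, Bᵀ * etaL * B = etaL ∧ A = AofBV B V := by
    obtain ⟨B, V, rfl⟩ := exists_eq_AofBV hA hfix
    exact ⟨B, V, preservesGram_AofBV_iff.mp hA, rfl⟩
  refine ⟨fun A hA hfix => ?_, fun B V _ => ⟨det_AofBV B V, neg_lprod_AofBV_mulVec_eps14 B V⟩,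
    ?_, ?_, ?_⟩
  · obtain ⟨B, V, hB, rfl⟩ := hex A hA hfix
    exact ⟨(B, V), ⟨hB, rfl⟩, fun _ h => AofBV_injective h.2.symm⟩
  · rintro ⟨B, V⟩ ⟨hB, hdet, hB₀⟩
    refine ⟨preservesGram_AofBV_iff.mpr hB, (det_AofBV B V).trans hdet, ?_, AofBV_mulVec_eps5 B V⟩
    rw [neg_lprod_AofBV_mulVec_eps14]
    linarith
  · exact AofBV_injective.injOn
  · rintro A ⟨hA, hdet, hA₁₄, hfix⟩
    obtain ⟨B, V, hB, rfl⟩ := hex A hA hfix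
    rw [det_AofBV] at hdet
    rw [neg_lprod_AofBV_mulVec_eps14] at hA₁₄
    exact ⟨(B, V), ⟨hB, hdet, by linarith⟩, rfl⟩
end

section
/- Let U ⊆ ℝ² be open, let u, 𝒦 : U → ℝ be smooth, and suppose ∂ₓ𝒦 = −(1/2) e^{2u}(∂ₓF + 4uₓF) and ∂_y𝒦 = (1/2) e^{2u}(∂_yF + 4u_yF), where F = e^{−2u}Δu. Set W = 𝒦 e^{−2u} and J = −(1/2) e^{−2u} Δu. Define 6×6 matrix-valued functions A and B on U as follows (rows and columns indexed 0,…,5, all unlisted entries zero): A has row 1 = (0, 2uₓ, (W+J)e^{u}, 0, 0, 0), row 2 = (e^{u}, e^{u}, 0, u_y, (W+J)e^{u}, 0), row 3 = (0, 0, −u_y, 0, 0, 0), row 4 = (0, 0, e^{u}, 0, −2uₓ, 0), row 5 = (0, 0, e^{u}, 0, 0, 0); B has row 1 = (0, 2u_y, 0, (W−J)e^{u}, 0, 0), row 2 = (0, 0, 0, −uₓ, 0, 0), row 3 = (e^{u}, −e^{u}, uₓ, 0, (W−J)e^{u}, 0), row 4 = (0, 0, 0, −e^{u}, −2u_y, 0),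 row 5 = (0, 0, 0, e^{u}, 0, 0). Then ∂ₓB − ∂_yA + AB − BA = 0 on U; that is, the 𝔩-valued 1-form α = A dx + B dy satisfies the Maurer–Cartan integrability condition dα + α ∧ α = 0. -/
/-- Partial derivative in the `x`-direction of a function on `ℝ²`. -/
noncomputable def pdx (f : ℝ × ℝ → ℝ) : ℝ × ℝ → ℝ := fun p => fderiv ℝ f p (1, 0)

/-- Partial derivative in the `y`-direction of a function on `ℝ²`. -/
noncomputable def pdy (f : ℝ × ℝ → ℝ) : ℝ × ℝ → ℝ := fun p => fderiv ℝ f p (0, 1)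

/-- The Laplacian `Δf = ∂ₓ²f + ∂ᵧ²f` of a function on `ℝ²`. -/
noncomputable def lap (f : ℝ × ℝ → ℝ) : ℝ × ℝ → ℝ :=
  fun p => pdx (pdx f) p + pdy (pdy f) p

/-- `F = e^{−2u} Δu`. -/
noncomputable def Ffun (u : ℝ × ℝ → ℝ) : ℝ × ℝ → ℝ :=
  fun p => Real.exp (-(2 * u p)) * lap u p

/-- `W = 𝒦 e^{−2u}`. -/
noncomputable def Wfun (u K : ℝ × ℝ → ℝ) : ℝ × ℝ → ℝ :=
  fun p => K p * Real.exp (-(2 * u p))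

/-- `J = −(1/2) e^{−2u} Δu`. -/
noncomputable def Jfun (u : ℝ × ℝ → ℝ) : ℝ × ℝ → ℝ :=
  fun p => -(1/2) * Real.exp (-(2 * u p)) * lap u p

/-- The `dx`-part `A` of the 𝔩-valued 1-form `α = A dx + B dy`. -/
noncomputable def Amat (u K : ℝ × ℝ → ℝ) (p : ℝ × ℝ) : Matrix (Fin 6) (Fin 6) ℝ :=
  let eu := Real.exp (u p)
  let ux := pdx u p
  let uy := pdy u p
  let w := Wfun u K p
  let j := Jfun u p
  !![0, 0, 0, 0, 0, 0;
     0, 2 * ux, (w + j) * eu, 0, 0, 0;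
     eu, eu, 0, uy, (w + j) * eu, 0;
     0, 0, -uy, 0, 0, 0;
     0, 0, eu, 0, -(2 * ux), 0;
     0, 0, eu, 0, 0, 0]

/-- The `dy`-part `B` of the 𝔩-valued 1-form `α = A dx + B dy`. -/
noncomputable def Bmat (u K : ℝ × ℝ → ℝ) (p : ℝ × ℝ) : Matrix (Fin 6) (Fin 6) ℝ :=
  let eu := Real.exp (u p)
  let ux := pdx u p
  let uy := pdy u p
  let w := Wfun u K p
  let j := Jfun u p
  !![0, 0, 0, 0, 0, 0;
     0, 2 * uy, 0, (w - j) * eu, 0, 0;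
     0, 0, 0, -ux, 0, 0;
     eu, -eu, ux, 0, (w - j) * eu, 0;
     0, 0, 0, -eu, -(2 * uy), 0;
     0, 0, 0, eu, 0, 0]

/-!
The curvature `∂ₓB − ∂ᵧA + [A, B]` can be computed entry by entry without any equation for `d𝒦`.
The entries linear in `∂u` cancel because `∂(e^u) = e^u ∂u`, the diagonal ones because second
derivatives are symmetric, and those involving `Δu` because `Δu = −2 J e^{2u}`.
In the remaining ones `W = 𝒦 e^{−2u}` turns `∂W + 2 W ∂u` into `e^{−2u} ∂𝒦`, so that each of them
is `± e^{−u}` times the defect of one of the two equations prescribing `d𝒦`.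
-/

section PartialDerivatives

variable {f : ℝ × ℝ → ℝ} {p : ℝ × ℝ} {m n : WithTop ℕ∞}

lemma contDiffAt_pdx (hf : ContDiffAt ℝ n f p) (hmn : m + 1 ≤ n) : ContDiffAt ℝ m (pdx f) p :=
  (hf.fderiv_right hmn).clm_apply contDiffAt_const

lemma contDiffAt_pdy (hf : ContDiffAt ℝ n f p) (hmn : m + 1 ≤ n) : ContDiffAt ℝ m (pdy f) p :=
  (hf.fderiv_right hmn).clm_apply contDiffAt_const

lemma contDiffAt_lap (hf : ContDiffAt ℝ n f p) (hmn : m + 1 + 1 ≤ n) :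
    ContDiffAt ℝ m (lap f) p :=
  (contDiffAt_pdx (contDiffAt_pdx hf hmn) le_rfl).add
    (contDiffAt_pdy (contDiffAt_pdy hf hmn) le_rfl)

lemma pdx_pdy_comm (hf : ContDiffAt ℝ 2 f p) : pdx (pdy f) p = pdy (pdx f) p := by
  have hdiff : DifferentiableAt ℝ (fderiv ℝ f) p :=
    (hf.fderiv_right (m := 1) (by norm_num)).differentiableAt one_ne_zero
  have hsymm : IsSymmSndFDerivAt ℝ f p := hf.isSymmSndFDerivAt (by simp)
  have hsnd (v w : ℝ × ℝ) :
      fderiv ℝ (fun q => fderiv ℝ f q v) p w = fderiv ℝ (fderiv ℝ f) p w v := by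
    simp [fderiv_clm_apply hdiff (differentiableAt_const v)]
  exact (hsnd _ _).trans ((hsymm.eq _ _).trans (hsnd _ _).symm)

end PartialDerivatives

lemma fderiv_mul_exp_apply {E : Type*} [NormedAddCommGroup E] [NormedSpace ℝ E] {f g : E → ℝ}
    {x : E} (hf : DifferentiableAt ℝ f x) (hg : DifferentiableAt ℝ g x) (v : E) :
    fderiv ℝ (fun y => f y * Real.exp (g y)) x v =
      (fderiv ℝ f x v + f x * fderiv ℝ g x v) * Real.exp (g x) := by
  simp only [fderiv_fun_mul hf hg.exp, fderiv_exp hg, add_apply,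
    smul_apply, smul_eq_mul]
  ring

lemma exp_mul_exp_neg_two_mul (t : ℝ) : Real.exp t * Real.exp (-(2 * t)) = Real.exp (-t) := by
  rw [← Real.exp_add]
  ring_nf

lemma exp_neg_mul_exp_two_mul (t : ℝ) : Real.exp (-t) * Real.exp (2 * t) = Real.exp t := by
  rw [← Real.exp_add]
  ring_nf

lemma Jfun_eq_neg_half_mul_Ffun (u : ℝ × ℝ → ℝ) : Jfun u = fun p => -(1 / 2) * Ffun u p := by
  funext p
  exact mul_assoc _ _ _

lemma lap_eq_neg_two_mul_Jfun_mul_exp_sq (u : ℝ × ℝ → ℝ) (p : ℝ × ℝ) :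
    lap u p = -2 * Jfun u p * (Real.exp (u p) * Real.exp (u p)) := by
  have hexp : Real.exp (-(2 * u p)) * (Real.exp (u p) * Real.exp (u p)) = 1 := by
    rw [← Real.exp_add, ← Real.exp_add, ← two_mul, neg_add_cancel, Real.exp_zero]
  unfold Jfun
  linear_combination -lap u p * hexp

/-- The defect of the equation `∂ₓ𝒦 = −(1/2) e^{2u} (∂ₓF + 4uₓF)`: left side minus right side. -/
noncomputable def defectX (u K : ℝ × ℝ → ℝ) (p : ℝ × ℝ) : ℝ :=
  pdx K p - -(1 / 2) * Real.exp (2 * u p) * (pdx (Ffun u) p + 4 * pdx u p * Ffun u p)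

/-- The defect of the equation `∂ᵧ𝒦 = (1/2) e^{2u} (∂ᵧF + 4uᵧF)`: left side minus right side. -/
noncomputable def defectY (u K : ℝ × ℝ → ℝ) (p : ℝ × ℝ) : ℝ :=
  pdy K p - (1 / 2) * Real.exp (2 * u p) * (pdy (Ffun u) p + 4 * pdy u p * Ffun u p)

/-- The coefficient of `dx ∧ dy` in `dα + α ∧ α`, for the matrix-valued 1-form
`α = A dx + B dy`; the partial derivatives of `A` and `B` are taken entrywise. -/
noncomputable def curvature {ι : Type*} [Fintype ι] (A B : ℝ × ℝ → Matrix ι ι ℝ) (p : ℝ × ℝ) :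
    Matrix ι ι ℝ :=
  (Matrix.of fun i j => pdx (fun q => B q i j) p) -
    (Matrix.of fun i j => pdy (fun q => A q i j) p) + (A p * B p - B p * A p)

section Invariants

variable {u K : ℝ × ℝ → ℝ} {p : ℝ × ℝ}

lemma differentiableAt_Wfun (hu : DifferentiableAt ℝ u p) (hK : DifferentiableAt ℝ K p) :
    DifferentiableAt ℝ (Wfun u K) p :=
  hK.mul (hu.const_mul 2).fun_neg.exp

lemma fderiv_Wfun_apply (hu : DifferentiableAt ℝ u p) (hK : DifferentiableAt ℝ K p)
    (v : ℝ × ℝ) :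
    fderiv ℝ (Wfun u K) p v =
      Real.exp (-(2 * u p)) * fderiv ℝ K p v - 2 * Wfun u K p * fderiv ℝ u p v := by
  have hexponent : fderiv ℝ (fun q => -(2 * u q)) p v = -(2 * fderiv ℝ u p v) := by
    simp [fderiv_fun_neg, fderiv_const_mul hu]
  have hprod := fderiv_mul_exp_apply hK (hu.const_mul 2).fun_neg v
  rw [hexponent] at hprod
  refine hprod.trans ?_
  unfold Wfun
  ring

lemma differentiableAt_Ffun (hu : ContDiffAt ℝ 3 u p) : DifferentiableAt ℝ (Ffun u) p :=
  ((hu.differentiableAt three_ne_zero).const_mul 2).fun_neg.exp.mul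
    ((contDiffAt_lap (m := 1) hu (by norm_num)).differentiableAt one_ne_zero)

lemma differentiableAt_Jfun (hu : ContDiffAt ℝ 3 u p) : DifferentiableAt ℝ (Jfun u) p := by
  rw [Jfun_eq_neg_half_mul_Ffun]
  exact (differentiableAt_Ffun hu).const_mul _

lemma fderiv_Jfun_apply (hu : ContDiffAt ℝ 3 u p) (v : ℝ × ℝ) :
    fderiv ℝ (Jfun u) p v = -(1 / 2) * fderiv ℝ (Ffun u) p v := by
  simp [Jfun_eq_neg_half_mul_Ffun, fderiv_const_mul (differentiableAt_Ffun hu)]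

lemma fderiv_Wfun_add_mul_Jfun_mul_exp_apply (hu : ContDiffAt ℝ 3 u p)
    (hK : DifferentiableAt ℝ K p) (s : ℝ) (v : ℝ × ℝ) :
    fderiv ℝ (fun q => (Wfun u K q + s * Jfun u q) * Real.exp (u q)) p v =
      -(Wfun u K p + 3 * s * Jfun u p) * fderiv ℝ u p v * Real.exp (u p) +
        Real.exp (-u p) * (fderiv ℝ K p v - s * (1 / 2) * Real.exp (2 * u p) *
          (fderiv ℝ (Ffun u) p v + 4 * fderiv ℝ u p v * Ffun u p)) := by
  have hdu : DifferentiableAt ℝ u p := hu.differentiableAt three_ne_zero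
  have hW : DifferentiableAt ℝ (Wfun u K) p := differentiableAt_Wfun hdu hK
  have hJ : DifferentiableAt ℝ (Jfun u) p := differentiableAt_Jfun hu
  have hJF : Jfun u p = -(1 / 2) * Ffun u p := congrFun (Jfun_eq_neg_half_mul_Ffun u) p
  have hsum : fderiv ℝ (fun q => Wfun u K q + s * Jfun u q) p v =
      Real.exp (-(2 * u p)) * fderiv ℝ K p v - 2 * Wfun u K p * fderiv ℝ u p v -
        s * (1 / 2) * fderiv ℝ (Ffun u) p v := by
    rw [fderiv_fun_add hW (hJ.const_mul s), fderiv_const_mul hJ, add_apply, smul_apply,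
      fderiv_Wfun_apply hdu hK, fderiv_Jfun_apply hu, smul_eq_mul]
    ring
  rw [fderiv_mul_exp_apply (hW.fun_add (hJ.const_mul s)) hdu, hsum, hJF]
  linear_combination fderiv ℝ K p v * exp_mul_exp_neg_two_mul (u p) +
    s * (1 / 2) * (fderiv ℝ (Ffun u) p v + 4 * fderiv ℝ u p v * Ffun u p) *
      exp_neg_mul_exp_two_mul (u p)

lemma pdx_Wfun_sub_Jfun_mul_exp (hu : ContDiffAt ℝ 3 u p) (hK : DifferentiableAt ℝ K p) :
    pdx (fun q => (Wfun u K q - Jfun u q) * Real.exp (u q)) p =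
      (3 * Jfun u p - Wfun u K p) * pdx u p * Real.exp (u p) +
        Real.exp (-u p) * defectX u K p := by
  have h := fderiv_Wfun_add_mul_Jfun_mul_exp_apply hu hK (-1) (1, 0)
  simp only [neg_one_mul, ← sub_eq_add_neg] at h
  rw [pdx, h, defectX, pdx, pdx, pdx]
  ring

lemma pdy_Wfun_add_Jfun_mul_exp (hu : ContDiffAt ℝ 3 u p) (hK : DifferentiableAt ℝ K p) :
    pdy (fun q => (Wfun u K q + Jfun u q) * Real.exp (u q)) p =
      -(Wfun u K p + 3 * Jfun u p) * pdy u p * Real.exp (u p) +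
        Real.exp (-u p) * defectY u K p := by
  have h := fderiv_Wfun_add_mul_Jfun_mul_exp_apply hu hK 1 (0, 1)
  simp only [one_mul, mul_one] at h
  exact h

end Invariants

section Curvature

variable {u K : ℝ × ℝ → ℝ} {p : ℝ × ℝ}

lemma pdx_Bmat (hu : ContDiffAt ℝ 2 u p) :
    (Matrix.of fun i j => pdx (fun q => Bmat u K q i j) p) =
      let eux := Real.exp (u p) * pdx u p
      let uxx := pdx (pdx u) p
      let uyx := pdx (pdy u) p
      let bx := pdx (fun q => (Wfun u K q - Jfun u q) * Real.exp (u q)) p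
      !![0, 0, 0, 0, 0, 0;
         0, 2 * uyx, 0, bx, 0, 0;
         0, 0, 0, -uxx, 0, 0;
         eux, -eux, uxx, 0, bx, 0;
         0, 0, 0, -eux, -(2 * uyx), 0;
         0, 0, 0, eux, 0, 0] := by
  have hdu : DifferentiableAt ℝ u p := hu.differentiableAt two_ne_zero
  have hconst (c : ℝ) : pdx (fun _ => c) p = 0 := by simp [pdx]
  have hneg (f : ℝ × ℝ → ℝ) : pdx (fun q => -f q) p = -pdx f p := by simp [pdx, fderiv_fun_neg]
  have hexp : pdx (fun q => Real.exp (u q)) p = Real.exp (u p) * pdx u p := by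
    simp [pdx, fderiv_exp hdu]
  have htwo : pdx (fun q => 2 * pdy u q) p = 2 * pdx (pdy u) p := by
    have huy : DifferentiableAt ℝ (pdy u) p :=
      (contDiffAt_pdy (m := 1) hu (by norm_num)).differentiableAt one_ne_zero
    exact congrArg (· (1, 0)) (fderiv_const_mul huy 2)
  ext i j
  fin_cases i <;> fin_cases j <;> simp [Bmat, hconst, hneg, hexp, htwo]

lemma pdy_Amat (hu : ContDiffAt ℝ 2 u p) :
    (Matrix.of fun i j => pdy (fun q => Amat u K q i j) p) =
      let euy := Real.exp (u p) * pdy u p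
      let uxy := pdy (pdx u) p
      let uyy := pdy (pdy u) p
      let ay := pdy (fun q => (Wfun u K q + Jfun u q) * Real.exp (u q)) p
      !![0, 0, 0, 0, 0, 0;
         0, 2 * uxy, ay, 0, 0, 0;
         euy, euy, 0, uyy, ay, 0;
         0, 0, -uyy, 0, 0, 0;
         0, 0, euy, 0, -(2 * uxy), 0;
         0, 0, euy, 0, 0, 0] := by
  have hdu : DifferentiableAt ℝ u p := hu.differentiableAt two_ne_zero
  have hconst (c : ℝ) : pdy (fun _ => c) p = 0 := by simp [pdy]
  have hneg (f : ℝ × ℝ → ℝ) : pdy (fun q => -f q) p = -pdy f p := by simp [pdy, fderiv_fun_neg]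
  have hexp : pdy (fun q => Real.exp (u q)) p = Real.exp (u p) * pdy u p := by
    simp [pdy, fderiv_exp hdu]
  have htwo : pdy (fun q => 2 * pdx u q) p = 2 * pdy (pdx u) p := by
    have hux : DifferentiableAt ℝ (pdx u) p :=
      (contDiffAt_pdx (m := 1) hu (by norm_num)).differentiableAt one_ne_zero
    exact congrArg (· (0, 1)) (fderiv_const_mul hux 2)
  ext i j
  fin_cases i <;> fin_cases j <;> simp [Amat, hconst, hneg, hexp, htwo]

lemma Amat_mul_Bmat_sub_Bmat_mul_Amat (u K : ℝ × ℝ → ℝ) (p : ℝ × ℝ) :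
    Amat u K p * Bmat u K p - Bmat u K p * Amat u K p =
      let e := Real.exp (u p)
      let eux := Real.exp (u p) * pdx u p
      let euy := Real.exp (u p) * pdy u p
      let w := Wfun u K p
      let j := Jfun u p
      !![0, 0, 0, 0, 0, 0;
         0, 0, -(w + 3 * j) * euy, (w - 3 * j) * eux, 0, 0;
         euy, euy, 0, -2 * j * (e * e), -(w + 3 * j) * euy, 0;
         -eux, eux, 2 * j * (e * e), 0, (w - 3 * j) * eux, 0;
         0, 0, euy, eux, 0, 0;
         0, 0, euy, -eux, 0, 0] := by
  ext i j
  fin_cases i <;> fin_cases j <;>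
    simp [Amat, Bmat] <;> ring

lemma curvature_Amat_Bmat (hu : ContDiffAt ℝ 3 u p) (hK : DifferentiableAt ℝ K p) :
    curvature (Amat u K) (Bmat u K) p =
      let cx := Real.exp (-u p) * defectX u K p
      let cy := Real.exp (-u p) * defectY u K p
      !![0, 0, 0, 0, 0, 0;
         0, 0, -cy, cx, 0, 0;
         0, 0, 0, 0, -cy, 0;
         0, 0, 0, 0, cx, 0;
         0, 0, 0, 0, 0, 0;
         0, 0, 0, 0, 0, 0] := by
  have hu2 : ContDiffAt ℝ 2 u p := hu.of_le (by norm_num)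
  have hgauss : pdx (pdx u) p + pdy (pdy u) p = _ := lap_eq_neg_two_mul_Jfun_mul_exp_sq u p
  rw [curvature, pdx_Bmat hu2, pdy_Amat hu2, Amat_mul_Bmat_sub_Bmat_mul_Amat,
    pdx_Wfun_sub_Jfun_mul_exp hu hK, pdy_Wfun_add_Jfun_mul_exp hu hK, pdx_pdy_comm hu2]
  ext i j
  fin_cases i <;> fin_cases j <;> simp <;> linarith

theorem stmt18_general (hu : ContDiffAt ℝ 3 u p) (hK : DifferentiableAt ℝ K p) :
    curvature (Amat u K) (Bmat u K) p = 0 ↔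
      pdx K p =
          -(1 / 2) * Real.exp (2 * u p) * (pdx (Ffun u) p + 4 * pdx u p * Ffun u p) ∧
        pdy K p =
          (1 / 2) * Real.exp (2 * u p) * (pdy (Ffun u) p + 4 * pdy u p * Ffun u p) := by
  rw [← sub_eq_zero (a := pdx K p), ← sub_eq_zero (a := pdy K p)]
  change _ ↔ defectX u K p = 0 ∧ defectY u K p = 0
  rw [curvature_Amat_Bmat hu hK]
  constructor
  · intro hcurv
    have hx := congrFun₂ hcurv 1 3
    have hy := congrFun₂ hcurv 1 2
    simpa [Real.exp_ne_zero] using And.intro hx hy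
  · rintro ⟨hx, hy⟩
    ext i j
    fin_cases i <;> fin_cases j <;> simp [hx, hy]

end Curvature

/-- If `∂ₓ𝒦 = −(1/2)e^{2u}(∂ₓF + 4uₓF)` and `∂ᵧ𝒦 = (1/2)e^{2u}(∂ᵧF + 4uᵧF)` with
`F = e^{−2u}Δu`, then the 𝔩-valued 1-form `α = A dx + B dy` built from
`W = 𝒦e^{−2u}` and `J = −(1/2)e^{−2u}Δu` satisfies the Maurer–Cartan integrability
condition `∂ₓB − ∂ᵧA + AB − BA = 0` on `U`, i.e. `dα + α ∧ α = 0`. -/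
theorem stmt18 (U : Set (ℝ × ℝ)) (hU : IsOpen U) (u K : ℝ × ℝ → ℝ)
    (hu : ContDiffOn ℝ (⊤ : ℕ∞) u U) (hK : ContDiffOn ℝ (⊤ : ℕ∞) K U)
    (hKx : ∀ p ∈ U, pdx K p =
      -(1/2) * Real.exp (2 * u p) * (pdx (Ffun u) p + 4 * pdx u p * Ffun u p))
    (hKy : ∀ p ∈ U, pdy K p =
      (1/2) * Real.exp (2 * u p) * (pdy (Ffun u) p + 4 * pdy u p * Ffun u p)) :
    ∀ p ∈ U, ∀ i j : Fin 6,
      pdx (fun q => Bmat u K q i j) p - pdy (fun q => Amat u K q i j) p +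
        (Amat u K p * Bmat u K p - Bmat u K p * Amat u K p) i j = 0 := by
  intro p hp i j
  have hu3 : ContDiffAt ℝ 3 u p := contDiffAt_infty.1 (hu.contDiffAt (hU.mem_nhds hp)) 3
  have hKd : DifferentiableAt ℝ K p := (hK.contDiffAt (hU.mem_nhds hp)).differentiableAt (by simp)
  exact congrFun₂ ((stmt18_general hu3 hKd).2 ⟨hKx p hp, hKy p hp⟩) i j
end
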